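/- Let χ be a nonzero extreme trace of A(GLB). The following conditions are equivalent: (1) for every n, the linear functional a ↦ χ([a]) on ℂ[GL(n,q)] is a linear combination of the characters (matrix traces) of the irreducible unipotent representations of GL(n,q); (2) the restriction of χ to H_q(∞) is not identically zero; (3) the restriction of χ to the two-sided ideal of A(GLB) generated by I_B is not identically zero. (Proposition 3.1, equivalence of conditions (1)–(3).) -/

import Mathlib

/-!
STATEMENT 0 (Theorem 3.3, multiplicativity of extreme unipotent traces of A(GLB)).
-/

open scoped ComplexOrder

variable (F : Type) [Field F] [Fintype F] [DecidableEq F]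

/-- `GL(n,q)`, the group of invertible `n × n` matrices over the finite field `F` (`q = |F|`). -/
abbrev GLn (n : ℕ) := GL (Fin n) F

/-- The complex group algebra `ℂ[GL(n,q)]`. -/
abbrev GA (n : ℕ) := MonoidAlgebra ℂ (GLn F n)

/-- `b` is an invertible upper-triangular matrix, i.e. an element of the Borel subgroup `B_n`. -/
def IsUT {n : ℕ} (b : GLn F n) : Prop :=
  ∀ i j : Fin n, j < i → (b : Matrix (Fin n) (Fin n) F) i j = 0

open scoped Classical in
/-- `Ext(g)`: the set of `h ∈ GL(n+1,q)` whose top-left `n × n` corner is `g` and whose last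
row vanishes except possibly at the `(n+1,n+1)` entry. -/
noncomputable def ExtSet {n : ℕ} (g : GLn F n) : Finset (GLn F (n + 1)) :=
  Finset.univ.filter (fun h =>
    (∀ i j : Fin n, (h : Matrix (Fin (n + 1)) (Fin (n + 1)) F) i.castSucc j.castSucc
        = (g : Matrix (Fin n) (Fin n) F) i j) ∧
    (∀ j : Fin n, (h : Matrix (Fin (n + 1)) (Fin (n + 1)) F) (Fin.last n) j.castSucc = 0))

/-- The parabolic embedding `i_n : ℂ[GL(n,q)] → ℂ[GL(n+1,q)]`,
`e_g ↦ (1/((q-1)q^n)) ∑_{h ∈ Ext(g)} e_h`. -/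
noncomputable def paraEmb (n : ℕ) : GA F n →ₗ[ℂ] GA F (n + 1) :=
  Finsupp.lsum ℂ (fun g => LinearMap.toSpanSingleton ℂ (GA F (n + 1))
    ((((Fintype.card F : ℂ) - 1) * (Fintype.card F : ℂ) ^ n)⁻¹ •
      ∑ h ∈ ExtSet F g, MonoidAlgebra.single h (1 : ℂ))) ∘ₗ
    (MonoidAlgebra.coeffLinearEquiv ℂ).toLinearMap

/-- Character of a matrix representation, as a linear functional on the group algebra. -/
noncomputable def charFun {n d : ℕ} (ρ : Representation ℂ (GLn F n) (Fin d → ℂ))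
    (a : GA F n) : ℂ :=
  Finsupp.sum a.coeff (fun g c => c * LinearMap.trace ℂ (Fin d → ℂ) (ρ g))

/-- `ρ` is an irreducible representation of `GL(n,q)` which is unipotent, i.e. possesses a
nonzero `B_n`-invariant vector. -/
def IsUnipotentIrrep {n d : ℕ} (ρ : Representation ℂ (GLn F n) (Fin d → ℂ)) : Prop :=
  (∀ W : Submodule ℂ (Fin d → ℂ), (∀ (g : GLn F n), ∀ v ∈ W, ρ g v ∈ W) → W = ⊥ ∨ W = ⊤) ∧
  (∃ v : Fin d → ℂ, v ≠ 0 ∧ ∀ b : GLn F n, IsUT F b → ρ b v = v)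

/-- A functional on `ℂ[GL(n,q)]` is unipotent if it is a linear combination of characters of
irreducible unipotent representations of `GL(n,q)`. -/
def IsUnipotentFunctional {n : ℕ} (φ : GA F n → ℂ) : Prop :=
  ∃ (k : ℕ) (c : Fin k → ℂ) (d : Fin k → ℕ)
    (ρ : (i : Fin k) → Representation ℂ (GLn F n) (Fin (d i) → ℂ)),
    (∀ i, IsUnipotentIrrep F (ρ i)) ∧ ∀ a : GA F n, φ a = ∑ i, c i * charFun F (ρ i) a

section Abstract
variable {A : Type} [NonUnitalRing A] [Module ℂ A] [SMulCommClass ℂ A A] [IsScalarTower ℂ A A]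
  [StarRing A] [StarModule ℂ A]

/-- A trace of a non-unital `*`-algebra: a central positive-definite linear functional. -/
def IsTrace (χ : A →ₗ[ℂ] ℂ) : Prop :=
  (∀ x y : A, χ (x * y) = χ (y * x)) ∧ (∀ x : A, 0 ≤ χ (star x * x))

/-- A nonzero trace is extreme if any decomposition into a sum of two traces is trivial. -/
def IsExtremeTrace (χ : A →ₗ[ℂ] ℂ) : Prop :=
  IsTrace χ ∧ χ ≠ 0 ∧ ∀ χ₁ χ₂ : A →ₗ[ℂ] ℂ, IsTrace χ₁ → IsTrace χ₂ → χ = χ₁ + χ₂ →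
    ∃ c₁ c₂ : ℝ, 0 ≤ c₁ ∧ 0 ≤ c₂ ∧ χ₁ = (c₁ : ℂ) • χ ∧ χ₂ = (c₂ : ℂ) • χ
end Abstract


open scoped Classical in
/-- The Iwahori–Hecke algebra `H_q(n)`: the set of `B_n`-biinvariant elements of `ℂ[GL(n,q)]`. -/
def heckeSet (n : ℕ) : Set (GA F n) :=
  {a | ∀ b₁ b₂ g : GLn F n, IsUT F b₁ → IsUT F b₂ → a.coeff (b₁ * g * b₂) = a.coeff g}


/-!
Let `e_n` be the idempotent of the Borel subgroup `B_n`; the parabolic embedding maps `e_n` to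
`e_{n+1}`, so all `e_n` have the same image `I_B` in `A(GLB)`. The two-sided ideal of `ℂ[GL(n,q)]`
generated by `e_n` has a central unit `z_n`, which acts as `1` on the unipotent irreducible
representations and as `0` on the others. A central functional `φ` on `ℂ[GL(n,q)]` is therefore
unipotent if and only if `φ(z_n a) = φ(a)` for all `a`.

By the Bruhat decomposition, `i_n(z_n)` acts as `i_n(1)` on the ideal generated by `e_{n+1}`, whence
`z_{n+1} i_n(a) = i_n(z_n a)`. So the `z_n` glue to a central projection `Z` of the multiplier
algebra of `A(GLB)`, whose range is the ideal generated by `I_B`. Then (1) says that `χ ∘ Z = χ` and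
(3) that `χ ∘ Z ≠ 0`; the two are equivalent because an extreme trace satisfies `χ ∘ Z = χ` or
`χ ∘ Z = 0`. Condition (2) is equivalent to (3) because `χ` is central and the images of the Hecke
algebras exhaust the corner `I_B A(GLB) I_B`.
-/

section CentralCover

theorem map_mem_twoSidedIdeal_span {R S 𝓕 : Type*} [NonUnitalNonAssocRing R]
    [NonUnitalNonAssocRing S] [FunLike 𝓕 R S] [NonUnitalRingHomClass 𝓕 R S] (f : 𝓕) {e x : R}
    (hx : x ∈ TwoSidedIdeal.span {e}) : f x ∈ TwoSidedIdeal.span {f e} := by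
  have hle : TwoSidedIdeal.span {e} ≤ (TwoSidedIdeal.span {f e}).comap f :=
    TwoSidedIdeal.span_le.2 <| Set.singleton_subset_iff.2 <|
      (TwoSidedIdeal.mem_comap f).2 (TwoSidedIdeal.subset_span rfl)
  exact (TwoSidedIdeal.mem_comap f).1 (hle hx)

variable {R : Type*} [NonUnitalRing R]

/-- `z` is a central cover of `e`: a central element of the two-sided ideal generated by `e` that
fixes `e`. Such a `z` is the unit of that ideal, hence an idempotent determined by `e`. -/
structure IsCentralCover (z e : R) : Prop where
  commute : ∀ a, Commute z a
  mem_span : z ∈ TwoSidedIdeal.span {e}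
  mul_eq : z * e = e

namespace IsCentralCover

variable {z e : R}

theorem mul_of_mem_span (hz : IsCentralCover z e) {x : R} (hx : x ∈ TwoSidedIdeal.span {e}) :
    z * x = x := by
  induction hx using TwoSidedIdeal.span_induction with
  | mem x hx => rw [Set.mem_singleton_iff.1 hx, hz.mul_eq]
  | zero => exact mul_zero z
  | add x y _ _ hx hy => rw [mul_add, hx, hy]
  | neg x _ hx => rw [mul_neg, hx]
  | left_absorb a x _ hx => rw [← mul_assoc, (hz.commute a).eq, mul_assoc, hx]
  | right_absorb a x _ hx => rw [← mul_assoc, hx]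

theorem isIdempotentElem (hz : IsCentralCover z e) : IsIdempotentElem z :=
  hz.mul_of_mem_span hz.mem_span

theorem isSelfAdjoint_map {A 𝓕 : Type*} [NonUnitalRing A] [StarRing A] [FunLike 𝓕 R A]
    [NonUnitalRingHomClass 𝓕 R A] (hz : IsCentralCover z e) (f : 𝓕) (he : IsSelfAdjoint (f e))
    (hf : ∀ x, ∃ y, f y = star (f x)) : IsSelfAdjoint (f z) := by
  have star_mem : ∀ x ∈ TwoSidedIdeal.span {e}, ∃ y ∈ TwoSidedIdeal.span {e}, f y = star (f x) := by
    intro x hx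
    induction hx using TwoSidedIdeal.span_induction with
    | mem x hx =>
      exact ⟨e, TwoSidedIdeal.subset_span rfl, by rw [Set.mem_singleton_iff.1 hx, he.star_eq]⟩
    | zero => exact ⟨0, TwoSidedIdeal.zero_mem _, by simp⟩
    | add x y _ _ hx hy =>
      obtain ⟨⟨x', hx', hfx⟩, ⟨y', hy', hfy⟩⟩ := And.intro hx hy
      exact ⟨x' + y', TwoSidedIdeal.add_mem _ hx' hy', by rw [map_add, hfx, hfy, map_add, star_add]⟩
    | neg x _ hx =>
      obtain ⟨x', hx', hfx⟩ := hx
      exact ⟨-x', TwoSidedIdeal.neg_mem _ hx', by rw [map_neg, hfx, map_neg, star_neg]⟩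
    | left_absorb a x _ hx =>
      obtain ⟨⟨x', hx', hfx⟩, ⟨a', hfa⟩⟩ := And.intro hx (hf a)
      exact ⟨x' * a', TwoSidedIdeal.mul_mem_right _ _ _ hx', by
        rw [map_mul, hfx, hfa, map_mul, star_mul]⟩
    | right_absorb a x _ hx =>
      obtain ⟨⟨x', hx', hfx⟩, ⟨a', hfa⟩⟩ := And.intro hx (hf a)
      exact ⟨a' * x', TwoSidedIdeal.mul_mem_left _ _ _ hx', by
        rw [map_mul, hfx, hfa, map_mul, star_mul]⟩
  obtain ⟨y, hy, hfy⟩ := star_mem z hz.mem_span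
  have hmul : f z * star (f z) = star (f z) := by rw [← hfy, ← map_mul, hz.mul_of_mem_span hy]
  exact IsSelfAdjoint.star_iff.1 (hmul ▸ IsSelfAdjoint.mul_star_self (f z))

end IsCentralCover

/-- In a semisimple ring a two-sided ideal has a left unit `f` and a right unit `g`, and then
`f = f * g = g` is central. -/
theorem exists_isCentralCover {R : Type*} [Ring R] [IsSemisimpleRing R] (e : R) :
    ∃ z : R, IsCentralCover z e := by
  set I := TwoSidedIdeal.span {e}
  obtain ⟨g, hg, hIg⟩ := IsSemisimpleRing.ideal_eq_span_idempotent (TwoSidedIdeal.asIdeal I)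
  obtain ⟨f, hf, hIf⟩ := IsSemisimpleRing.ideal_eq_span_idempotent (TwoSidedIdeal.asIdealOpposite I)
  have hgI : g ∈ I := TwoSidedIdeal.mem_asIdeal.1 (hIg ▸ Ideal.mem_span_singleton_self g)
  have hfI : f.unop ∈ I :=
    TwoSidedIdeal.mem_asIdealOpposite.1 (hIf ▸ Ideal.mem_span_singleton_self f)
  have mul_g : ∀ x ∈ I, x * g = x := by
    intro x hx
    obtain ⟨a, rfl⟩ := Ideal.mem_span_singleton'.1 (hIg ▸ TwoSidedIdeal.mem_asIdeal.2 hx)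
    rw [mul_assoc, hg.eq]
  have f_mul : ∀ x ∈ I, f.unop * x = x := by
    intro x hx
    have hx' : MulOpposite.op x ∈ TwoSidedIdeal.asIdealOpposite I :=
      TwoSidedIdeal.mem_asIdealOpposite.2 hx
    obtain ⟨a, ha⟩ := Ideal.mem_span_singleton'.1 (hIf ▸ hx')
    apply MulOpposite.op_injective
    rw [MulOpposite.op_mul, MulOpposite.op_unop, ← ha, mul_assoc, hf.eq]
  have hfg : f.unop = g := by rw [← mul_g _ hfI, f_mul g hgI]
  rw [hfg] at f_mul
  refine ⟨g, fun a => ?_, hgI, f_mul e (TwoSidedIdeal.subset_span rfl)⟩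
  rw [commute_iff_eq, ← mul_g _ (I.mul_mem_right g a hgI), mul_assoc,
    f_mul _ (I.mul_mem_left a g hgI)]

theorem exists_mem_span_ne_zero_iff_exists_corner_ne_zero {M 𝓕 : Type*} [AddCommGroup M]
    [FunLike 𝓕 R M] [AddMonoidHomClass 𝓕 R M] {e : R} (he : IsIdempotentElem e) {χ : 𝓕}
    (hχ : ∀ x y, χ (x * y) = χ (y * x)) :
    (∃ x ∈ TwoSidedIdeal.span {e}, χ x ≠ 0) ↔ ∃ w, χ (e * w * e) ≠ 0 := by
  refine ⟨?_, fun ⟨w, hw⟩ =>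
    ⟨_, TwoSidedIdeal.mul_mem_left _ _ _ (TwoSidedIdeal.subset_span rfl), hw⟩⟩
  contrapose!
  intro hcorner x hx
  have map_e_mul (w : R) : χ (e * w) = 0 := by
    rw [← he.eq, mul_assoc, hχ, hcorner w]
  suffices χ x = 0 ∧ ∀ w, χ (x * w) = 0 from this.1
  induction hx using TwoSidedIdeal.span_induction with
  | mem x hx =>
    rw [Set.mem_singleton_iff.1 hx]
    exact ⟨he.eq ▸ map_e_mul e, map_e_mul⟩
  | zero => simp
  | add x y _ _ hx hy => simp [add_mul, hx, hy]
  | neg x _ hx => simp [hx]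
  | left_absorb a x _ hx =>
    exact ⟨by rw [hχ, hx.2], fun w => by rw [mul_assoc, hχ, mul_assoc, hx.2]⟩
  | right_absorb a x _ hx => exact ⟨hx.2 a, fun w => by rw [mul_assoc, hx.2]⟩

end CentralCover

section CentralProjection

section

variable {𝕜 A : Type*} [Semiring 𝕜] [NonUnitalRing A] [Module 𝕜 A] [StarRing A]

/-- `Z` is a central projection of the multiplier algebra of `A`, viewed as the operator
`x ↦ Z * x = x * Z` on the algebra `A`, which need not have a unit. -/
structure IsCentralProjection (Z : A →ₗ[𝕜] A) : Prop where
  map_mul_left : ∀ x y, Z (x * y) = Z x * y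
  map_mul_right : ∀ x y, Z (x * y) = x * Z y
  apply_apply : ∀ x, Z (Z x) = Z x
  map_star : ∀ x, Z (star x) = star (Z x)

namespace IsCentralProjection

variable {Z : A →ₗ[𝕜] A}

theorem apply_of_mem_span (hZ : IsCentralProjection Z) {e x : A} (he : Z e = e)
    (hx : x ∈ TwoSidedIdeal.span {e}) : Z x = x := by
  induction hx using TwoSidedIdeal.span_induction with
  | mem x hx => rw [Set.mem_singleton_iff.1 hx, he]
  | zero => exact map_zero Z
  | add x y _ _ hx hy => rw [map_add, hx, hy]
  | neg x _ hx => rw [map_neg, hx]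
  | left_absorb a x _ hx => rw [hZ.map_mul_right, hx]
  | right_absorb a x _ hx => rw [hZ.map_mul_left, hx]

theorem apply_star_mul_self (hZ : IsCentralProjection Z) (x : A) :
    Z (star x * x) = star (Z x) * Z x := by
  rw [← hZ.map_star, ← hZ.map_mul_left, ← hZ.map_mul_right, hZ.apply_apply]

end IsCentralProjection

end

theorem IsCentralProjection.id_sub {𝕜 A : Type*} [Ring 𝕜] [NonUnitalRing A] [Module 𝕜 A]
    [StarRing A] {Z : A →ₗ[𝕜] A} (hZ : IsCentralProjection Z) :
    IsCentralProjection (LinearMap.id - Z) where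
  map_mul_left x y := by simp [hZ.map_mul_left, sub_mul]
  map_mul_right x y := by simp [hZ.map_mul_right, mul_sub]
  apply_apply x := by simp [hZ.apply_apply]
  map_star x := by simp [hZ.map_star]

section Trace

variable {A : Type} [NonUnitalRing A] [Module ℂ A] [StarRing A] {χ : A →ₗ[ℂ] ℂ} {Z : A →ₗ[ℂ] A}

theorem IsTrace.comp_isCentralProjection (hχ : IsTrace χ) (hZ : IsCentralProjection Z) :
    IsTrace (χ ∘ₗ Z) where
  left x y := by
    simp only [LinearMap.comp_apply, hZ.map_mul_left x, hZ.map_mul_right y, hχ.1 (Z x)]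
  right x := by
    rw [LinearMap.comp_apply, hZ.apply_star_mul_self]
    exact hχ.2 (Z x)

/-- Extremality applies to the decomposition `χ = χ ∘ Z + χ ∘ (1 - Z)`; the coefficient of the
first summand is idempotent because `Z` is. -/
theorem IsExtremeTrace.comp_isCentralProjection_eq_self_or_eq_zero (hχ : IsExtremeTrace χ)
    (hZ : IsCentralProjection Z) : χ ∘ₗ Z = χ ∨ χ ∘ₗ Z = 0 := by
  obtain ⟨htrace, hχ₀, hsplit⟩ := hχ
  obtain ⟨c, -, -, -, hc, -⟩ := hsplit _ _ (htrace.comp_isCentralProjection hZ)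
    (htrace.comp_isCentralProjection hZ.id_sub) (by ext x; simp)
  have hcc : ((c : ℂ) * c) • χ = (c : ℂ) • χ := by
    rw [mul_smul, ← hc, ← LinearMap.smul_comp, ← hc]
    ext x
    exact congrArg χ (hZ.apply_apply x)
  have hc_idem : IsIdempotentElem (c : ℂ) := smul_left_injective ℂ hχ₀ hcc
  rcases IsIdempotentElem.iff_eq_zero_or_one.1 hc_idem with h | h
  · exact Or.inr (by rw [hc, h, zero_smul])
  · exact Or.inl (by rw [hc, h, one_smul])

end Trace

section Limit

open Filter

theorem exists_linearMap_eventually_eq {α 𝕜 M N : Type*} [Semiring 𝕜] [AddCommMonoid M]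
    [AddCommMonoid N] [Module 𝕜 M] [Module 𝕜 N] {l : Filter α} [l.NeBot] {T : α → M →ₗ[𝕜] N}
    (hT : ∀ x, ∃ y, ∀ᶠ i in l, T i x = y) : ∃ Z : M →ₗ[𝕜] N, ∀ x, ∀ᶠ i in l, T i x = Z x := by
  choose Z hZ using hT
  refine ⟨{ toFun := Z, map_add' := fun x y => ?_, map_smul' := fun c x => ?_ }, hZ⟩
  · obtain ⟨i, hx, hy, hxy⟩ := ((hZ x).and ((hZ y).and (hZ (x + y)))).exists
    rw [← hx, ← hy, ← hxy, map_add]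
  · obtain ⟨i, hx, hcx⟩ := ((hZ x).and (hZ (c • x))).exists
    rw [← hx, ← hcx, map_smul, RingHom.id_apply]

theorem exists_isCentralProjection_eventually_eq {α 𝕜 A : Type*} [Semiring 𝕜] [NonUnitalRing A]
    [Module 𝕜 A] [SMulCommClass 𝕜 A A] [StarRing A] {l : Filter α} [l.NeBot] {ζ : α → A}
    (hidem : ∀ i, IsIdempotentElem (ζ i)) (hself : ∀ i, IsSelfAdjoint (ζ i))
    (hcomm : ∀ x, ∀ᶠ i in l, Commute (ζ i) x) (hlim : ∀ x, ∃ y, ∀ᶠ i in l, ζ i * x = y) :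
    ∃ Z : A →ₗ[𝕜] A, IsCentralProjection Z ∧ ∀ x, ∀ᶠ i in l, ζ i * x = Z x := by
  obtain ⟨Z, hZ⟩ :=
    exists_linearMap_eventually_eq (𝕜 := 𝕜) (T := fun i => LinearMap.mulLeft 𝕜 (ζ i)) hlim
  simp only [LinearMap.mulLeft_apply] at hZ
  refine ⟨Z, ⟨fun x y => ?_, fun x y => ?_, fun x => ?_, fun x => ?_⟩, hZ⟩
  · obtain ⟨i, hx, hxy⟩ := ((hZ x).and (hZ (x * y))).exists
    rw [← hxy, ← hx, mul_assoc]
  · obtain ⟨i, hx, hy, hxy⟩ := ((hcomm x).and ((hZ y).and (hZ (x * y)))).exists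
    rw [← hxy, ← hy, ← mul_assoc, hx.eq, mul_assoc]
  · obtain ⟨i, hx, hZx⟩ := ((hZ x).and (hZ (Z x))).exists
    rw [← hZx, ← hx, ← mul_assoc, (hidem i).eq]
  · obtain ⟨i, hx, hsx, hc⟩ := ((hZ x).and ((hZ (star x)).and (hcomm (star x)))).exists
    rw [← hsx, ← hx, star_mul, (hself i).star_eq, hc.eq]

end Limit

end CentralProjection

section CentralFunctional

theorem exists_eq_trace_smul {n k M : Type*} [Fintype n] [CommSemiring k]
    [AddCommMonoid M] [Module k M] {φ : Matrix n n k →ₗ[k] M} (hφ : ∀ x y, φ (x * y) = φ (y * x)) :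
    ∃ m : M, ∀ a, φ a = a.trace • m := by
  classical
  rcases isEmpty_or_nonempty n with _ | ⟨⟨i₀⟩⟩
  · exact ⟨0, fun a => by rw [Subsingleton.elim a 0, map_zero, smul_zero]⟩
  refine ⟨φ (Matrix.single i₀ i₀ 1), fun a => ?_⟩
  have single_apply (i j : n) :
      φ (Matrix.single i j 1) = (Matrix.single i j (1 : k)).trace • φ (Matrix.single i₀ i₀ 1) := by
    rw [← one_mul (1 : k), ← Matrix.single_mul_single_same (c := (1 : k)) i i₀ j, hφ]
    rcases eq_or_ne i j with rfl | hij
    · simp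
    · simp [hij.symm, Matrix.trace_single_eq_of_ne, hij]
  have heq : φ = (Matrix.traceLinearMap n k k).smulRight (φ (Matrix.single i₀ i₀ 1)) := by
    refine Matrix.ext_linearMap k fun i j => ?_
    ext
    simpa using single_apply i j
  exact LinearMap.congr_fun heq a

theorem exists_eq_sum_trace {k R : Type*} [Field k] [IsAlgClosed k] [Ring R] [Algebra k R]
    [FiniteDimensional k R] [IsSemisimpleRing R] {φ : R →ₗ[k] k}
    (hφ : ∀ x y, φ (x * y) = φ (y * x)) :
    ∃ (m : ℕ) (d : Fin m → ℕ) (π : ∀ i, R →ₐ[k] Matrix (Fin (d i)) (Fin (d i)) k) (c : Fin m → k),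
      (∀ i, Function.Surjective (π i)) ∧ ∀ a, φ a = ∑ i, c i * (π i a).trace := by
  obtain ⟨m, d, -, ⟨E⟩⟩ := IsSemisimpleRing.exists_algEquiv_pi_matrix_of_isAlgClosed k R
  let ψ (i : Fin m) : Matrix (Fin (d i)) (Fin (d i)) k →ₗ[k] k :=
    φ ∘ₗ E.symm.toLinearMap ∘ₗ LinearMap.single k (fun i => Matrix (Fin (d i)) (Fin (d i)) k) i
  have hψ (i) (x y) : ψ i (x * y) = ψ i (y * x) := by
    simp only [ψ, LinearMap.comp_apply, LinearMap.single_apply, Pi.single_mul,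
      AlgEquiv.toLinearMap_apply, map_mul, hφ]
  choose c hc using fun i => exists_eq_trace_smul (hψ i)
  refine ⟨m, d, fun i => (Pi.evalAlgHom k _ i).comp E.toAlgHom, c,
    fun i => (Function.surjective_eval i).comp E.surjective, fun a => ?_⟩
  calc φ a = φ (E.symm (∑ i, Pi.single i (E a i))) := by
        rw [Finset.univ_sum_single, E.symm_apply_apply]
    _ = ∑ i, ψ i (E a i) := by rw [map_sum, map_sum]; rfl
    _ = ∑ i, c i * (E a i).trace := by simp only [hc, smul_eq_mul, mul_comm]

/-- The representation of `G` on column vectors determined by a matrix representation of its group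
algebra. -/
noncomputable def matrixRep {k G : Type*} [CommSemiring k] [Monoid G] {d : ℕ}
    (π : MonoidAlgebra k G →ₐ[k] Matrix (Fin d) (Fin d) k) : Representation k G (Fin d → k) :=
  (MonoidAlgebra.lift k (Module.End k (Fin d → k)) G).symm
    ((Matrix.toLinAlgEquiv' : _ ≃ₐ[k] Module.End k (Fin d → k)).toAlgHom.comp π)

theorem asAlgebraHom_matrixRep {k G : Type*} [CommSemiring k] [Monoid G] {d : ℕ}
    (π : MonoidAlgebra k G →ₐ[k] Matrix (Fin d) (Fin d) k) (a : MonoidAlgebra k G) :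
    (matrixRep π).asAlgebraHom a = Matrix.toLin' (π a) := by
  rw [Representation.asAlgebraHom, matrixRep, Equiv.apply_symm_apply]
  rfl

theorem asAlgebraHom_apply_mem {k G V : Type*} [CommSemiring k] [Monoid G] [AddCommMonoid V]
    [Module k V] {ρ : Representation k G V} {W : Submodule k V} (hW : ∀ g, ∀ v ∈ W, ρ g v ∈ W)
    (a : MonoidAlgebra k G) {v : V} (hv : v ∈ W) : ρ.asAlgebraHom a v ∈ W := by
  induction a using MonoidAlgebra.induction_on with
  | of g => simpa using hW g v hv
  | add a b ha hb => simpa using W.add_mem ha hb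
  | smul c a ha => simpa using W.smul_mem c ha

theorem eq_bot_or_eq_top_of_asAlgebraHom_surjective {k G V : Type*} [Field k] [Monoid G]
    [AddCommGroup V] [Module k V] {ρ : Representation k G V}
    (hρ : Function.Surjective ρ.asAlgebraHom) {W : Submodule k V}
    (hW : ∀ g, ∀ v ∈ W, ρ g v ∈ W) : W = ⊥ ∨ W = ⊤ := by
  refine or_iff_not_imp_left.2 fun hbot => W.eq_top_iff'.2 fun w => ?_
  obtain ⟨v, hvW, hv⟩ := W.exists_mem_ne_zero_of_ne_bot hbot
  have : Nontrivial V := ⟨v, 0, hv⟩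
  obtain ⟨f, rfl⟩ := IsSimpleModule.toSpanSingleton_surjective (Module.End k V) hv w
  obtain ⟨a, rfl⟩ := hρ f
  exact asAlgebraHom_apply_mem hW a hvW

theorem eq_one_of_commute_of_apply_eq_self {k G V : Type*} [CommRing k] [Monoid G]
    [AddCommGroup V] [Module k V] {ρ : Representation k G V}
    (hρ : ∀ W : Submodule k V, (∀ g, ∀ v ∈ W, ρ g v ∈ W) → W = ⊥ ∨ W = ⊤)
    {T : Module.End k V} (hT : ∀ g, Commute T (ρ g)) {v : V} (hv : v ≠ 0) (hTv : T v = v) :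
    T = 1 := by
  rw [← sub_eq_zero, ← LinearMap.ker_eq_top]
  refine (hρ _ fun g w hw => ?_).resolve_left fun hbot => hv ?_
  · have : (T - 1) (ρ g w) = ρ g ((T - 1) w) :=
      LinearMap.congr_fun ((hT g).sub_left (Commute.one_left _)).eq w
    rw [LinearMap.mem_ker] at hw ⊢
    rw [this, hw, map_zero]
  · rw [← Submodule.mem_bot k, ← hbot, LinearMap.mem_ker, LinearMap.sub_apply, hTv,
      Module.End.one_apply, sub_self]

end CentralFunctional

section Parabolic

open scoped Matrix

theorem det_eq_of_row_eq_zero {R : Type*} [CommRing R] {n : ℕ}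
    {M : Matrix (Fin (n + 1)) (Fin (n + 1)) R} {k i : Fin (n + 1)} (hM : ∀ j ≠ i, M k j = 0) :
    M.det = (-1) ^ (k + i : ℕ) * M k i * (M.submatrix k.succAbove i.succAbove).det := by
  rw [Matrix.det_succ_row M k]
  exact Finset.sum_eq_single i (fun j _ hj => by rw [hM j hj]; ring) (by simp)

theorem det_eq_of_last_row_eq_zero {R : Type*} [CommRing R] {n : ℕ}
    {M : Matrix (Fin (n + 1)) (Fin (n + 1)) R} (hM : ∀ j : Fin n, M (Fin.last n) j.castSucc = 0) :
    M.det = M (Fin.last n) (Fin.last n) * (M.submatrix Fin.castSucc Fin.castSucc).det := by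
  rw [det_eq_of_row_eq_zero (k := Fin.last n) (i := Fin.last n) fun j hj => ?_]
  · simp [Fin.succAbove_last, ← two_mul]
  · obtain ⟨j, rfl⟩ := Fin.exists_castSucc_eq.2 hj
    exact hM j

section Borel

variable {K : Type} [Field K] {n : ℕ}

theorem IsUT.mul {b c : GLn K n} (hb : IsUT K b) (hc : IsUT K c) : IsUT K (b * c) :=
  Matrix.BlockTriangular.mul (b := id) hb hc

theorem IsUT.one : IsUT K (1 : GLn K n) :=
  Matrix.blockTriangular_one (b := id)

theorem IsUT.inv {b : GLn K n} (hb : IsUT K b) : IsUT K b⁻¹ := by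
  have : (b⁻¹ : GLn K n).val.BlockTriangular id := by
    rw [Matrix.coe_units_inv]
    exact Matrix.blockTriangular_inv_of_blockTriangular (b := id) hb
  exact this

/-- Inserts the `p`-th unit vector as `p`-th row and column. This embeds `GL(n)` into `GL(n+1)` as
the pointwise stabilizer of the `p`-th basis vector and its dual. -/
def insertOne (R : Type*) [Semiring R] {n : ℕ} (p : Fin (n + 1)) :
    Matrix (Fin n) (Fin n) R →* Matrix (Fin (n + 1)) (Fin (n + 1)) R where
  toFun b := Matrix.of (p.insertNth (Pi.single p 1) fun i => p.insertNth 0 (b i))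
  map_one' := by
    ext i j
    cases i using p.succAboveCases <;> cases j using p.succAboveCases <;>
      simp [Matrix.one_apply, Fin.succAbove_ne, (Fin.succAbove_ne _ _).symm]
  map_mul' b c := by
    ext i j
    cases i using p.succAboveCases <;> cases j using p.succAboveCases <;>
      simp [Matrix.mul_apply, Fin.sum_univ_succAbove _ p, Fin.succAbove_ne]

theorem insertOne_self {R : Type*} [Semiring R] (p : Fin (n + 1)) (b : Matrix (Fin n) (Fin n) R) :
    insertOne R p b p = Pi.single p 1 := by
  ext j
  simp [insertOne]

theorem insertOne_succAbove_self {R : Type*} [Semiring R] (p : Fin (n + 1))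
    (b : Matrix (Fin n) (Fin n) R) (i : Fin n) : insertOne R p b (p.succAbove i) p = 0 := by
  simp [insertOne]

theorem insertOne_succAbove_succAbove {R : Type*} [Semiring R] (p : Fin (n + 1))
    (b : Matrix (Fin n) (Fin n) R) (i j : Fin n) :
    insertOne R p b (p.succAbove i) (p.succAbove j) = b i j := by
  simp [insertOne]

theorem IsUT.map_insertOne {b : GLn K n} (hb : IsUT K b) (p : Fin (n + 1)) :
    IsUT K (Units.map (insertOne K p) b) := by
  intro i j hji
  change insertOne K p b.val i j = 0
  cases i using p.succAboveCases with
  | x => rw [insertOne_self, Pi.single_eq_of_ne hji.ne]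
  | p i =>
    cases j using p.succAboveCases with
    | x => rw [insertOne_succAbove_self]
    | p j => rw [insertOne_succAbove_succAbove, hb i j (p.succAbove_lt_succAbove_iff.1 hji)]

/-- The column operations clearing a row to the right of its first nonzero entry, and normalizing
that entry, are upper triangular. -/
theorem exists_isUT_mul_row_eq_single (h : GLn K n) (k : Fin n) :
    ∃ u, IsUT K u ∧ ∃ i, (h * u).val k = Pi.single i 1 := by
  set r := h.val k
  have hr : ∃ i, r i ≠ 0 := by
    by_contra! hzero
    exact h.det_ne_zero (Matrix.det_eq_zero_of_row_eq_zero k hzero)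
  obtain ⟨i, hi, hmin⟩ := WellFounded.has_min wellFounded_lt {i | r i ≠ 0} hr
  let M := (1 : Matrix (Fin n) (Fin n) K).updateRow i r
  have hM : M.IsUpperTriangular := by
    intro a c hca
    rcases eq_or_ne a i with rfl | hai
    · simpa [M] using not_not.1 fun hc => hmin c hc hca
    · simpa [M, hai] using Matrix.one_apply_ne (show c < a from hca).ne'
  have hdet : M.det ≠ 0 := by
    rw [Matrix.det_of_isUpperTriangular hM]
    refine Finset.prod_ne_zero_iff.2 fun a _ => ?_
    rcases eq_or_ne a i with rfl | hai
    · simpa [M] using hi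
    · simp [M, hai]
  let u : GLn K n := Matrix.GeneralLinearGroup.mkOfDetNeZero M hdet
  have hu : IsUT K u := fun a c hca => hM hca
  refine ⟨u⁻¹, hu.inv, i, Matrix.vecMul_injective_of_isUnit u.isUnit ?_⟩
  calc (h * u⁻¹).val k ᵥ* u.val = (h * u⁻¹ * u).val k := rfl
    _ = M i := by simp [M, r]
    _ = Pi.single i 1 ᵥ* u.val := (Matrix.single_one_vecMul i M).symm

end Borel

variable {F} {n : ℕ}

theorem mem_ExtSet {g : GLn F n} {h : GLn F (n + 1)} :
    h ∈ ExtSet F g ↔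
      (∀ i j : Fin n, h.val i.castSucc j.castSucc = g.val i j) ∧
        ∀ j : Fin n, h.val (Fin.last n) j.castSucc = 0 := by
  simp [ExtSet]

theorem mul_mem_ExtSet {g g' : GLn F n} {h h' : GLn F (n + 1)} (hh : h ∈ ExtSet F g)
    (hh' : h' ∈ ExtSet F g') : h * h' ∈ ExtSet F (g * g') := by
  rw [mem_ExtSet] at *
  simp [Matrix.mul_apply, Fin.sum_univ_castSucc, hh, hh']

theorem exists_mem_ExtSet_of_last_row_eq_zero {h : GLn F (n + 1)}
    (hh : ∀ j : Fin n, h.val (Fin.last n) j.castSucc = 0) : ∃ g, h ∈ ExtSet F g := by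
  have hdet := h.det_ne_zero
  rw [det_eq_of_last_row_eq_zero hh] at hdet
  exact ⟨.mkOfDetNeZero _ (right_ne_zero_of_mul hdet), mem_ExtSet.2 ⟨fun i j => rfl, hh⟩⟩

theorem card_ExtSet (g : GLn F n) :
    (ExtSet F g).card = (Fintype.card F - 1) * Fintype.card F ^ n := by
  classical
  have hcard : (Finset.univ.erase (0 : F) ×ˢ (Finset.univ : Finset (Fin n → F))).card =
      (Fintype.card F - 1) * Fintype.card F ^ n := by
    simp
  rw [← hcard]
  refine Finset.card_nbij
    (fun h => (h.val (Fin.last n) (Fin.last n), fun i => h.val i.castSucc (Fin.last n))) ?_ ?_ ?_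
  · intro h hh
    have hdet := h.det_ne_zero
    rw [det_eq_of_last_row_eq_zero (mem_ExtSet.1 hh).2] at hdet
    simpa using left_ne_zero_of_mul hdet
  · intro h hh h' hh' heq
    obtain ⟨hlast, hcol⟩ := Prod.ext_iff.1 heq
    rw [Finset.mem_coe, mem_ExtSet] at hh hh'
    ext i j
    cases i using Fin.lastCases <;> cases j using Fin.lastCases <;>
      simp_all [funext_iff]
  · rintro ⟨c, v⟩ hcv
    let M : Matrix (Fin (n + 1)) (Fin (n + 1)) F :=
      Matrix.of (Fin.snoc (fun i => Fin.snoc (g.val i) (v i)) (Fin.snoc 0 c))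
    have hcorner : M.submatrix Fin.castSucc Fin.castSucc = g.val := by
      ext i j
      simp [M]
    have hlast (j : Fin n) : M (Fin.last n) j.castSucc = 0 := by simp [M]
    have hdet : M.det ≠ 0 := by
      rw [det_eq_of_last_row_eq_zero hlast, hcorner]
      exact mul_ne_zero (by simpa [M] using hcv) g.det_ne_zero
    refine ⟨.mkOfDetNeZero M hdet, mem_ExtSet.2 ⟨congrFun₂ hcorner, hlast⟩, ?_⟩
    ext <;> simp [M]

theorem map_mulLeft_ExtSet {k : GLn F n} {h : GLn F (n + 1)} (hh : h ∈ ExtSet F k) (g : GLn F n) :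
    (ExtSet F g).map (mulLeftEmbedding h) = ExtSet F (k * g) := by
  refine Finset.eq_of_subset_of_card_le (Finset.map_subset_iff_subset_preimage.2 ?_) ?_
  · exact fun x hx => Finset.mem_preimage.2 (mul_mem_ExtSet hh hx)
  · rw [Finset.card_map, card_ExtSet, card_ExtSet]

theorem map_mulRight_ExtSet {k : GLn F n} {h : GLn F (n + 1)} (hh : h ∈ ExtSet F k) (g : GLn F n) :
    (ExtSet F g).map (mulRightEmbedding h) = ExtSet F (g * k) := by
  refine Finset.eq_of_subset_of_card_le (Finset.map_subset_iff_subset_preimage.2 ?_) ?_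
  · exact fun x hx => Finset.mem_preimage.2 (mul_mem_ExtSet hx hh)
  · rw [Finset.card_map, card_ExtSet, card_ExtSet]

theorem IsUT.exists_mem_ExtSet {b : GLn F (n + 1)} (hb : IsUT F b) :
    ∃ b', IsUT F b' ∧ b ∈ ExtSet F b' := by
  obtain ⟨b', hb'⟩ := exists_mem_ExtSet_of_last_row_eq_zero fun j => hb _ _ (Fin.castSucc_lt_last j)
  refine ⟨b', fun i j hji => ?_, hb'⟩
  rw [← (mem_ExtSet.1 hb').1, hb _ _ hji]

theorem IsUT.of_mem_ExtSet {b : GLn F n} {h : GLn F (n + 1)} (hb : IsUT F b)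
    (hh : h ∈ ExtSet F b) : IsUT F h := by
  obtain ⟨hcorner, hlast⟩ := mem_ExtSet.1 hh
  intro i j hji
  obtain ⟨j, rfl⟩ := Fin.exists_castSucc_eq.2 (hji.trans_le i.le_last).ne
  induction i using Fin.lastCases with
  | last => exact hlast j
  | cast i => rw [hcorner, hb i j hji]

theorem exists_mul_insertOne_mul_inv_mem_ExtSet {h : GLn F (n + 1)} {i : Fin (n + 1)}
    (hrow : h.val (Fin.last n) = Pi.single i 1) :
    ∃ g : GLn F n, ∀ b, h * Units.map (insertOne F i) b * h⁻¹ ∈ ExtSet F (g * b * g⁻¹) := by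
  have hdet := det_eq_of_row_eq_zero (M := h.val) (k := Fin.last n) (i := i) fun j hj => by
    rw [hrow, Pi.single_eq_of_ne hj]
  let g : GLn F n := .mkOfDetNeZero _ (right_ne_zero_of_mul (hdet ▸ h.det_ne_zero))
  have hg (j c : Fin n) : g.val j c = h.val j.castSucc (i.succAbove c) := by simp [g]
  refine ⟨g, fun b => ?_⟩
  set k := h * Units.map (insertOne F i) b * h⁻¹
  have hk : k * h = h * Units.map (insertOne F i) b := inv_mul_cancel_right _ _
  have klast : k.val (Fin.last n) = Pi.single (Fin.last n) 1 := by
    refine Matrix.vecMul_injective_of_isUnit h.isUnit ?_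
    calc k.val (Fin.last n) ᵥ* h.val = (k * h).val (Fin.last n) := rfl
      _ = h.val (Fin.last n) ᵥ* insertOne F i b.val := by rw [hk]; rfl
      _ = h.val (Fin.last n) := by rw [hrow, Matrix.single_one_vecMul]; exact insertOne_self i b.val
      _ = Pi.single (Fin.last n) 1 ᵥ* h.val := (Matrix.single_one_vecMul _ _).symm
  obtain ⟨k', hk'⟩ := exists_mem_ExtSet_of_last_row_eq_zero (h := k) fun j => by
    rw [klast, Pi.single_eq_of_ne (Fin.castSucc_ne_last j)]
  suffices k' * g = g * b by rwa [← this, mul_inv_cancel_right]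
  ext a c
  calc (k' * g).val a c
      = ∑ j : Fin n, k.val a.castSucc j.castSucc * h.val j.castSucc (i.succAbove c) := by
        rw [Units.val_mul, Matrix.mul_apply]
        exact Finset.sum_congr rfl fun j _ => by rw [(mem_ExtSet.1 hk').1, hg]
    _ = (k * h).val a.castSucc (i.succAbove c) := by
        simp [Units.val_mul, Matrix.mul_apply, Fin.sum_univ_castSucc, hrow]
    _ = (h.val * insertOne F i b.val) a.castSucc (i.succAbove c) := by rw [hk]; rfl
    _ = (g * b).val a c := by
        simp [Matrix.mul_apply, Fin.sum_univ_succAbove _ i, insertOne_self,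
          insertOne_succAbove_succAbove, hg]

/-- All that is needed of the Bruhat decomposition: the image in `GL(n,q)` of the intersection of
`h B_{n+1} h⁻¹` with the parabolic subgroup `⋃ Ext(g)` contains a conjugate of `B_n`. -/
theorem exists_mem_ExtSet_conj_isUT (h : GLn F (n + 1)) :
    ∃ g : GLn F n, ∀ b, IsUT F b → ∃ k ∈ ExtSet F (g * b * g⁻¹), IsUT F (h⁻¹ * k * h) := by
  obtain ⟨u, hu, i, hi⟩ := exists_isUT_mul_row_eq_single h (Fin.last n)
  obtain ⟨g, hg⟩ := exists_mul_insertOne_mul_inv_mem_ExtSet hi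
  refine ⟨g, fun b hb => ⟨_, hg b, ?_⟩⟩
  convert (hu.mul (hb.map_insertOne i)).mul hu.inv using 1
  group

end Parabolic

section ParabolicEmbedding

open MonoidAlgebra (single)

variable {F} {n : ℕ}

theorem paraEmb_single (g : GLn F n) :
    paraEmb F n (single g 1) =
      (((Fintype.card F : ℂ) - 1) * (Fintype.card F : ℂ) ^ n)⁻¹ •
        ∑ h ∈ ExtSet F g, single h (1 : ℂ) := by
  simp [paraEmb]

theorem map_paraEmb_single {V : Type*} [AddCommMonoid V] [Module ℂ V] (L : GA F (n + 1) →ₗ[ℂ] V)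
    {g : GLn F n} {v : V} (hL : ∀ h ∈ ExtSet F g, L (single h 1) = v) :
    L (paraEmb F n (single g 1)) = v := by
  have hF : 1 < Fintype.card F := Fintype.one_lt_card
  have hcard : ((ExtSet F g).card : ℂ) = (Fintype.card F - 1) * (Fintype.card F : ℂ) ^ n := by
    rw [card_ExtSet]
    push_cast [Nat.cast_sub hF.le]
    rfl
  have hcard_ne : ((ExtSet F g).card : ℂ) ≠ 0 := by
    rw [card_ExtSet]
    exact_mod_cast mul_ne_zero (Nat.sub_ne_zero_of_lt hF) (pow_ne_zero n (by omega))
  rw [paraEmb_single, ← hcard, map_smul, map_sum, Finset.sum_congr rfl hL, Finset.sum_const,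
    ← Nat.cast_smul_eq_nsmul ℂ, inv_smul_smul₀ hcard_ne]

theorem single_mul_paraEmb {k : GLn F n} {h : GLn F (n + 1)} (hh : h ∈ ExtSet F k) (a : GA F n) :
    single h 1 * paraEmb F n a = paraEmb F n (single k 1 * a) := by
  induction a using MonoidAlgebra.induction_on with
  | of g =>
    simp only [MonoidAlgebra.of_apply, MonoidAlgebra.single_mul_single, mul_one, paraEmb_single,
      mul_smul_comm, Finset.mul_sum, ← map_mulLeft_ExtSet hh, Finset.sum_map,
      mulLeftEmbedding_apply]
  | add a b ha hb => simp only [map_add, mul_add, ha, hb]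
  | smul c a ha => simp only [map_smul, mul_smul_comm, ha]

theorem paraEmb_mul_single {k : GLn F n} {h : GLn F (n + 1)} (hh : h ∈ ExtSet F k) (a : GA F n) :
    paraEmb F n a * single h 1 = paraEmb F n (a * single k 1) := by
  induction a using MonoidAlgebra.induction_on with
  | of g =>
    simp only [MonoidAlgebra.of_apply, MonoidAlgebra.single_mul_single, mul_one, paraEmb_single,
      smul_mul_assoc, Finset.sum_mul, ← map_mulRight_ExtSet hh, Finset.sum_map,
      mulRightEmbedding_apply]
  | add a b ha hb => simp only [map_add, add_mul, ha, hb]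
  | smul c a ha => simp only [map_smul, smul_mul_assoc, ha]

theorem paraEmb_mul (a b : GA F n) : paraEmb F n (a * b) = paraEmb F n a * paraEmb F n b := by
  induction a using MonoidAlgebra.induction_on with
  | of g =>
    exact (map_paraEmb_single (LinearMap.mulRight ℂ (paraEmb F n b)) fun h hh =>
      single_mul_paraEmb hh b).symm
  | add a a' ha ha' => simp only [map_add, add_mul, ha, ha']
  | smul c a ha => simp only [map_smul, smul_mul_assoc, ha]

variable (F n) in
/-- The parabolic embedding `paraEmb` as a ring homomorphism. It is not unital: it maps `1` to the
idempotent of the subgroup `Ext(1)`. -/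
noncomputable def paraEmbHom : GA F n →ₙ+* GA F (n + 1) where
  toFun := paraEmb F n
  map_mul' := paraEmb_mul
  map_zero' := map_zero _
  map_add' := map_add _

variable (F) in
/-- The idempotent `|B_n|⁻¹ ∑_{b ∈ B_n} e_b`, defined as the image of `1` under the parabolic
embeddings `ℂ[GL(0,q)] → ⋯ → ℂ[GL(n,q)]`. -/
noncomputable def borelIdem : ∀ n : ℕ, GA F n
  | 0 => 1
  | n + 1 => paraEmb F n (borelIdem n)

theorem single_mul_borelIdem {b : GLn F n} (hb : IsUT F b) :
    single b 1 * borelIdem F n = borelIdem F n := by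
  induction n with
  | zero => rw [Subsingleton.elim b 1, ← MonoidAlgebra.one_def, one_mul]
  | succ n ih =>
    obtain ⟨b', hb', hb⟩ := hb.exists_mem_ExtSet
    rw [borelIdem, single_mul_paraEmb hb, ih hb']

theorem borelIdem_mul_single {b : GLn F n} (hb : IsUT F b) :
    borelIdem F n * single b 1 = borelIdem F n := by
  induction n with
  | zero => rw [Subsingleton.elim b 1, ← MonoidAlgebra.one_def, mul_one]
  | succ n ih =>
    obtain ⟨b', hb', hb⟩ := hb.exists_mem_ExtSet
    rw [borelIdem, paraEmb_mul_single hb, ih hb']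

theorem map_borelIdem {V : Type*} [AddCommMonoid V] [Module ℂ V] (L : GA F n →ₗ[ℂ] V) {v : V}
    (hL : ∀ b, IsUT F b → L (single b 1) = v) : L (borelIdem F n) = v := by
  induction n with
  | zero => exact hL 1 IsUT.one
  | succ n ih =>
    exact ih (L ∘ₗ paraEmb F n) fun b hb =>
      map_paraEmb_single L fun h hh => hL h (hb.of_mem_ExtSet hh)

theorem isIdempotentElem_borelIdem : IsIdempotentElem (borelIdem F n) :=
  map_borelIdem (LinearMap.mulRight ℂ (borelIdem F n)) fun _ hb => single_mul_borelIdem hb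

theorem mem_heckeSet_iff {a : GA F n} :
    a ∈ heckeSet F n ↔ borelIdem F n * a * borelIdem F n = a := by
  refine ⟨fun ha => ?_, fun ha b₁ b₂ g hb₁ hb₂ => ?_⟩
  · have hleft : borelIdem F n * a = a := by
      refine map_borelIdem (LinearMap.mulRight ℂ a) fun b hb => ?_
      ext g
      simpa using ha b⁻¹ 1 g hb.inv IsUT.one
    have hright : a * borelIdem F n = a := by
      refine map_borelIdem (LinearMap.mulLeft ℂ a) fun b hb => ?_
      ext g
      simpa using ha 1 b⁻¹ g IsUT.one hb.inv
    rw [hleft, hright]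
  · have hinv : single b₁⁻¹ 1 * a * single b₂⁻¹ 1 = a := by
      rw [← ha, ← mul_assoc, ← mul_assoc, single_mul_borelIdem hb₁.inv, mul_assoc (_ * a),
        borelIdem_mul_single hb₂.inv]
    conv_rhs => rw [← hinv]
    simp [MonoidAlgebra.coeff_mul_single_apply, MonoidAlgebra.coeff_single_mul_apply, mul_assoc]

/-- The average of `exists_mem_ExtSet_conj_isUT` over `b ∈ B_n`. -/
theorem exists_paraEmb_conj_borelIdem_mul (h : GLn F (n + 1)) :
    ∃ g : GLn F n, paraEmb F n (single g 1 * borelIdem F n * single g⁻¹ 1) *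
      (single h 1 * borelIdem F (n + 1)) = paraEmb F n 1 * (single h 1 * borelIdem F (n + 1)) := by
  obtain ⟨g, hg⟩ := exists_mem_ExtSet_conj_isUT h
  refine ⟨g, map_borelIdem (LinearMap.mulRight ℂ (single h 1 * borelIdem F (n + 1)) ∘ₗ
    paraEmb F n ∘ₗ LinearMap.mulRight ℂ (single g⁻¹ 1) ∘ₗ LinearMap.mulLeft ℂ (single g 1))
    fun b hb => ?_⟩
  obtain ⟨k, hk, hkh⟩ := hg b hb
  have hfix : single k 1 * (single h 1 * borelIdem F (n + 1)) =
      single h (1 : ℂ) * borelIdem F (n + 1) := by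
    conv_rhs => rw [← single_mul_borelIdem hkh]
    simp [← mul_assoc, MonoidAlgebra.single_mul_single]
  calc paraEmb F n (single g 1 * single b 1 * single g⁻¹ 1) * (single h 1 * borelIdem F (n + 1))
      = paraEmb F n 1 * single k 1 * (single h 1 * borelIdem F (n + 1)) := by
        rw [paraEmb_mul_single hk]
        simp [MonoidAlgebra.single_mul_single]
    _ = paraEmb F n 1 * (single h 1 * borelIdem F (n + 1)) := by rw [mul_assoc, hfix]

namespace IsCentralCover

variable {z : GA F n}

theorem paraEmb_mul_mul_borelIdem (hz : IsCentralCover z (borelIdem F n)) (x : GA F (n + 1)) :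
    paraEmb F n z * (x * borelIdem F (n + 1)) = paraEmb F n 1 * (x * borelIdem F (n + 1)) := by
  induction x using MonoidAlgebra.induction_on with
  | of h =>
    obtain ⟨g, hg⟩ := exists_paraEmb_conj_borelIdem_mul h
    have hzg : z * (single g 1 * borelIdem F n * single g⁻¹ 1) =
        single g 1 * borelIdem F n * single g⁻¹ 1 := by
      rw [← mul_assoc, ← mul_assoc, (hz.commute _).eq, mul_assoc (single g 1), hz.mul_eq]
    rw [MonoidAlgebra.of_apply, ← mul_one z, paraEmb_mul, mul_assoc, ← hg, ← mul_assoc,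
      ← paraEmb_mul, hzg]
  | add x y hx hy => simp only [add_mul, mul_add, hx, hy]
  | smul c x hx => simp only [smul_mul_assoc, mul_smul_comm, hx]

theorem paraEmb_mul_of_mem_span (hz : IsCentralCover z (borelIdem F n)) {y : GA F (n + 1)}
    (hy : y ∈ TwoSidedIdeal.span {borelIdem F (n + 1)}) :
    paraEmb F n z * y = paraEmb F n 1 * y := by
  suffices ∀ x, paraEmb F n z * (x * y) = paraEmb F n 1 * (x * y) by simpa using this 1
  induction hy using TwoSidedIdeal.span_induction with
  | mem y hy => rw [Set.mem_singleton_iff.1 hy]; exact hz.paraEmb_mul_mul_borelIdem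
  | zero => simp
  | add y y' _ _ hy hy' => simp [mul_add, hy, hy']
  | neg y _ hy => simp [hy]
  | left_absorb a y _ hy => intro x; rw [← mul_assoc x, hy]
  | right_absorb a y _ hy => intro x; simp only [← mul_assoc] at hy ⊢; rw [hy]

theorem mul_paraEmb (hz : IsCentralCover z (borelIdem F n)) {z' : GA F (n + 1)}
    (hz' : IsCentralCover z' (borelIdem F (n + 1))) (a : GA F n) :
    z' * paraEmb F n a = paraEmb F n (z * a) := by
  have hz_mem : paraEmb F n z ∈ TwoSidedIdeal.span {borelIdem F (n + 1)} :=
    map_mem_twoSidedIdeal_span (paraEmbHom F n) hz.mem_span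
  calc z' * paraEmb F n a = z' * paraEmb F n (1 * a) := by rw [one_mul]
    _ = paraEmb F n 1 * z' * paraEmb F n a := by rw [paraEmb_mul, ← mul_assoc, (hz'.commute _).eq]
    _ = paraEmb F n z * z' * paraEmb F n a := by rw [hz.paraEmb_mul_of_mem_span hz'.mem_span]
    _ = paraEmb F n (z * a) := by
      rw [← (hz'.commute _).eq, hz'.mul_of_mem_span hz_mem, paraEmb_mul]

end IsCentralCover

end ParabolicEmbedding

section Unipotent

open MonoidAlgebra (single)

section

variable {K : Type} [Field K] {n : ℕ}

theorem charFun_eq_trace_asAlgebraHom {d : ℕ} (ρ : Representation ℂ (GLn K n) (Fin d → ℂ))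
    (a : GA K n) : charFun K ρ a = LinearMap.trace ℂ _ (ρ.asAlgebraHom a) := by
  rw [Representation.asAlgebraHom_def, MonoidAlgebra.lift_apply, map_finsuppSum]
  simp only [map_smul, smul_eq_mul, charFun]

theorem charFun_matrixRep {d : ℕ} (π : GA K n →ₐ[ℂ] Matrix (Fin d) (Fin d) ℂ) (a : GA K n) :
    charFun K (matrixRep π) a = (π a).trace := by
  rw [charFun_eq_trace_asAlgebraHom, asAlgebraHom_matrixRep, Matrix.trace_toLin'_eq]

theorem isUnipotentFunctional_of_eq_sum {κ : Type*} [Fintype κ] {φ : GA K n → ℂ} {d : κ → ℕ}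
    {ρ : ∀ i, Representation ℂ (GLn K n) (Fin (d i) → ℂ)} (hρ : ∀ i, IsUnipotentIrrep K (ρ i))
    {c : κ → ℂ} (hφ : ∀ a, φ a = ∑ i, c i * charFun K (ρ i) a) : IsUnipotentFunctional K φ :=
  let κ' := (Fintype.equivFin κ).symm
  ⟨_, c ∘ κ', d ∘ κ', fun i => ρ (κ' i), fun i => hρ (κ' i), fun a =>
    (hφ a).trans (κ'.sum_comp fun i => c i * charFun K (ρ i) a).symm⟩

end

variable {F} {n : ℕ}

theorem asAlgebraHom_borelIdem_of_forall {d : ℕ}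
    {ρ : Representation ℂ (GLn F n) (Fin d → ℂ)} {v : Fin d → ℂ} (hv : ∀ b, IsUT F b → ρ b v = v) :
    ρ.asAlgebraHom (borelIdem F n) v = v :=
  map_borelIdem (LinearMap.applyₗ v ∘ₗ ρ.asAlgebraHom.toLinearMap) fun b hb => by
    simpa using hv b hb

theorem IsCentralCover.asAlgebraHom_eq_one {z : GA F n} (hz : IsCentralCover z (borelIdem F n))
    {d : ℕ} {ρ : Representation ℂ (GLn F n) (Fin d → ℂ)} (hρ : IsUnipotentIrrep F ρ) :
    ρ.asAlgebraHom z = 1 := by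
  obtain ⟨hirr, v, hv, hvB⟩ := hρ
  have hev := asAlgebraHom_borelIdem_of_forall hvB
  refine eq_one_of_commute_of_apply_eq_self hirr (fun g => ?_) hv ?_
  · simpa using (hz.commute (single g 1)).map ρ.asAlgebraHom
  · rw [← hev, ← Module.End.mul_apply, ← map_mul, hz.mul_eq]

theorem isUnipotentIrrep_matrixRep {d : ℕ} {π : GA F n →ₐ[ℂ] Matrix (Fin d) (Fin d) ℂ}
    (hπ : Function.Surjective π) (he : π (borelIdem F n) ≠ 0) :
    IsUnipotentIrrep F (matrixRep π) := by
  have hsurj : Function.Surjective (matrixRep π).asAlgebraHom := by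
    rw [show ⇑(matrixRep π).asAlgebraHom = Matrix.toLin' ∘ π from
      funext (asAlgebraHom_matrixRep π)]
    exact Matrix.toLin'.surjective.comp hπ
  have he' : (matrixRep π).asAlgebraHom (borelIdem F n) ≠ 0 := by
    rwa [asAlgebraHom_matrixRep, map_ne_zero_iff _ Matrix.toLin'.injective]
  obtain ⟨v, hv⟩ := DFunLike.ne_iff.1 he'
  refine ⟨fun W => eq_bot_or_eq_top_of_asAlgebraHom_surjective hsurj, _, hv, fun b hb => ?_⟩
  rw [← Representation.asAlgebraHom_single_one, ← Module.End.mul_apply, ← map_mul,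
    single_mul_borelIdem hb]

theorem isUnipotentFunctional_iff {z : GA F n} (hz : IsCentralCover z (borelIdem F n))
    {φ : GA F n →ₗ[ℂ] ℂ} (hφ : ∀ x y, φ (x * y) = φ (y * x)) :
    IsUnipotentFunctional F φ ↔ ∀ a, φ (z * a) = φ a := by
  constructor
  · rintro ⟨m, c, d, ρ, hρ, hsum⟩ a
    simp only [hsum, charFun_eq_trace_asAlgebraHom, map_mul, hz.asAlgebraHom_eq_one (hρ _), one_mul]
  · intro hfix
    obtain ⟨m, d, π, c, hπ, hsum⟩ := exists_eq_sum_trace hφ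
    have map_z_eq_zero (i) (hi : π i (borelIdem F n) = 0) : π i z = 0 := by
      have hle : TwoSidedIdeal.span {borelIdem F n} ≤ TwoSidedIdeal.ker (π i) :=
        TwoSidedIdeal.span_le.2 (Set.singleton_subset_iff.2 ((TwoSidedIdeal.mem_ker _).2 hi))
      exact (TwoSidedIdeal.mem_ker _).1 (hle hz.mem_span)
    have hunip (i : {i // π i (borelIdem F n) ≠ 0}) := isUnipotentIrrep_matrixRep (hπ i) i.2
    refine isUnipotentFunctional_of_eq_sum hunip (c := fun i => c i) fun a => ?_
    calc φ a = ∑ i, c i * (π i (z * a)).trace := by rw [← hfix, hsum]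
      _ = ∑ i with π i (borelIdem F n) ≠ 0, c i * (π i (z * a)).trace := by
        refine (Finset.sum_filter_of_ne fun i _ => mt fun hi => ?_).symm
        rw [map_mul, map_z_eq_zero i hi, zero_mul, Matrix.trace_zero, mul_zero]
      _ = ∑ i : {i // π i (borelIdem F n) ≠ 0}, c i * charFun F (matrixRep (π i)) (z * a) := by
        simp only [charFun_matrixRep]
        exact Finset.sum_subtype _ (by simp) _
      _ = ∑ i : {i // π i (borelIdem F n) ≠ 0}, c i * charFun F (matrixRep (π i)) a := by
        simp only [charFun_eq_trace_asAlgebraHom, map_mul, hz.asAlgebraHom_eq_one (hunip _),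
          one_mul]

end Unipotent

section Quotient

open Filter

variable {F} {A : Type} [NonUnitalRing A] [Module ℂ A] [StarRing A]

/-- The maps `ι n : ℂ[GL(n,q)] → A` present `A` as a quotient `*`-algebra of the direct limit
`A(GLB)`; it is `A(GLB)` itself exactly when all of them are injective. -/
structure IsGLBQuotient (ι : ∀ n, GA F n →ₗ[ℂ] A) : Prop where
  map_paraEmb : ∀ n a, ι (n + 1) (paraEmb F n a) = ι n a
  map_mul : ∀ n a b, ι n (a * b) = ι n a * ι n b
  exists_map_eq : ∀ x, ∃ n a, ι n a = x
  star_map_single : ∀ n g,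
    star (ι n (MonoidAlgebra.single g 1)) = ι n (MonoidAlgebra.single g⁻¹ 1)

namespace IsGLBQuotient

variable {ι : ∀ n, GA F n →ₗ[ℂ] A}

/-- The map `ι n` as a ring homomorphism; it maps `1` to an idempotent of `A`. -/
noncomputable def toHom (hι : IsGLBQuotient ι) (n : ℕ) : GA F n →ₙ+* A where
  toFun := ι n
  map_mul' := hι.map_mul n
  map_zero' := map_zero _
  map_add' := map_add _

theorem map_borelIdem (hι : IsGLBQuotient ι) (n : ℕ) : ι n (borelIdem F n) = ι 0 1 := by
  induction n with
  | zero => rfl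
  | succ n ih => rw [borelIdem, hι.map_paraEmb, ih]

theorem eventually_mem_range (hι : IsGLBQuotient ι) (x : A) : ∀ᶠ n in atTop, ∃ a, ι n a = x := by
  obtain ⟨n, hn⟩ := hι.exists_map_eq x
  refine (eventually_ge_atTop n).mono fun m hnm => ?_
  induction m, hnm using Nat.le_induction with
  | base => exact hn
  | succ m _ ih =>
    obtain ⟨a, rfl⟩ := ih
    exact ⟨paraEmb F m a, hι.map_paraEmb m a⟩

theorem exists_map_eq_star [StarModule ℂ A] (hι : IsGLBQuotient ι) (n : ℕ) (a : GA F n) :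
    ∃ a', ι n a' = star (ι n a) := by
  induction a using MonoidAlgebra.induction_on with
  | of g => exact ⟨_, (hι.star_map_single n g).symm⟩
  | add a b ha hb =>
    obtain ⟨⟨a', ha⟩, ⟨b', hb⟩⟩ := And.intro ha hb
    exact ⟨a' + b', by rw [map_add, ha, hb, map_add, star_add]⟩
  | smul c a ha =>
    obtain ⟨a', ha⟩ := ha
    exact ⟨star c • a', by rw [map_smul, ha, map_smul, star_smul]⟩

theorem isIdempotentElem_map_one (hι : IsGLBQuotient ι) : IsIdempotentElem (ι 0 1) := by
  rw [IsIdempotentElem, ← hι.map_mul, one_mul]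

theorem isSelfAdjoint_map_one (hι : IsGLBQuotient ι) : IsSelfAdjoint (ι 0 1) := by
  rw [isSelfAdjoint_iff, MonoidAlgebra.one_def, hι.star_map_single, inv_one]

theorem map_mem_span (hι : IsGLBQuotient ι) {n : ℕ} {a : GA F n}
    (ha : a ∈ TwoSidedIdeal.span {borelIdem F n}) :
    ι n a ∈ TwoSidedIdeal.span {ι 0 1} := by
  rw [← hι.map_borelIdem n]
  exact map_mem_twoSidedIdeal_span (hι.toHom n) ha

variable {z : ∀ n, GA F n}

theorem map_centralCover_mul_map (hι : IsGLBQuotient ι)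
    (hz : ∀ n, IsCentralCover (z n) (borelIdem F n)) {n m : ℕ} (hnm : n ≤ m) (a : GA F n) :
    ι m (z m) * ι n a = ι n (z n * a) := by
  suffices ∃ b, ι m b = ι n a ∧ ι m (z m * b) = ι n (z n * a) by
    obtain ⟨b, hb, hzb⟩ := this
    rw [← hb, ← hι.map_mul, hzb]
  induction m, hnm using Nat.le_induction with
  | base => exact ⟨a, rfl, rfl⟩
  | succ m _ ih =>
    obtain ⟨b, hb, hzb⟩ := ih
    refine ⟨paraEmb F m b, (hι.map_paraEmb m b).trans hb, ?_⟩
    rw [(hz m).mul_paraEmb (hz (m + 1)), hι.map_paraEmb, hzb]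

theorem exists_isCentralProjection [SMulCommClass ℂ A A] [StarModule ℂ A]
    (hι : IsGLBQuotient ι) (hz : ∀ n, IsCentralCover (z n) (borelIdem F n)) :
    ∃ Z : A →ₗ[ℂ] A, IsCentralProjection Z ∧ ∀ n a, Z (ι n a) = ι n (z n * a) := by
  have hlim (n : ℕ) (a : GA F n) : ∀ᶠ m in atTop, ι m (z m) * ι n a = ι n (z n * a) :=
    (eventually_ge_atTop n).mono fun m hnm => hι.map_centralCover_mul_map hz hnm a
  obtain ⟨Z, hZ, hZlim⟩ := exists_isCentralProjection_eventually_eq (𝕜 := ℂ) (l := atTop)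
    (ζ := fun n => ι n (z n))
    (fun n => (hz n).isIdempotentElem.map (hι.toHom n))
    (fun n => (hz n).isSelfAdjoint_map (hι.toHom n)
      (show IsSelfAdjoint (ι n (borelIdem F n)) from
        (hι.map_borelIdem n).symm ▸ hι.isSelfAdjoint_map_one)
      (hι.exists_map_eq_star n))
    (fun x => (hι.eventually_mem_range x).mono fun n ⟨a, ha⟩ =>
      ha ▸ ((hz n).commute a).map (hι.toHom n))
    (fun x => by
      obtain ⟨n, a, rfl⟩ := hι.exists_map_eq x
      exact ⟨_, hlim n a⟩)
  refine ⟨Z, hZ, fun n a => ?_⟩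
  obtain ⟨m, hm, hm'⟩ := ((hZlim (ι n a)).and (hlim n a)).exists
  rw [← hm, hm']

variable {Z : A →ₗ[ℂ] A} {χ : A →ₗ[ℂ] ℂ}

theorem forall_isUnipotentFunctional_iff (hι : IsGLBQuotient ι)
    (hz : ∀ n, IsCentralCover (z n) (borelIdem F n)) (hZ : ∀ n a, Z (ι n a) = ι n (z n * a))
    (hχ : ∀ x y, χ (x * y) = χ (y * x)) :
    (∀ n, IsUnipotentFunctional F (fun a => χ (ι n a))) ↔ χ ∘ₗ Z = χ := by
  have hχι (n : ℕ) (a b : GA F n) : (χ ∘ₗ ι n) (a * b) = (χ ∘ₗ ι n) (b * a) := by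
    simp only [LinearMap.comp_apply, hι.map_mul, hχ]
  calc (∀ n, IsUnipotentFunctional F (fun a => χ (ι n a)))
      ↔ ∀ n a, χ (ι n (z n * a)) = χ (ι n a) :=
        forall_congr' fun n => isUnipotentFunctional_iff (hz n) (hχι n)
    _ ↔ χ ∘ₗ Z = χ := by
        refine ⟨fun h => LinearMap.ext fun x => ?_, fun h n a => ?_⟩
        · obtain ⟨n, a, rfl⟩ := hι.exists_map_eq x
          rw [LinearMap.comp_apply, hZ, h]
        · rw [← hZ, ← LinearMap.comp_apply, h]

theorem exists_mem_span_ne_zero_iff (hι : IsGLBQuotient ι)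
    (hz : ∀ n, IsCentralCover (z n) (borelIdem F n))
    (hZproj : IsCentralProjection Z) (hZ : ∀ n a, Z (ι n a) = ι n (z n * a)) :
    (∃ x ∈ TwoSidedIdeal.span {ι 0 1}, χ x ≠ 0) ↔ χ ∘ₗ Z ≠ 0 := by
  have hZe : Z (ι 0 1) = ι 0 1 := by rw [hZ]; exact congrArg (ι 0) (hz 0).mul_eq
  constructor
  · rintro ⟨x, hx, hχx⟩ hχZ
    rw [← hZproj.apply_of_mem_span hZe hx, ← LinearMap.comp_apply, hχZ] at hχx
    exact hχx rfl
  · intro hχZ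
    obtain ⟨x, hx⟩ := DFunLike.ne_iff.1 hχZ
    obtain ⟨n, a, rfl⟩ := hι.exists_map_eq x
    refine ⟨_, hι.map_mem_span (TwoSidedIdeal.mul_mem_right _ _ a (hz n).mem_span), ?_⟩
    rwa [← hZ]

theorem exists_mem_heckeSet_ne_zero_iff (hι : IsGLBQuotient ι) (hχ : ∀ x y, χ (x * y) = χ (y * x)) :
    (∃ n, ∃ a ∈ heckeSet F n, χ (ι n a) ≠ 0) ↔
      ∃ x ∈ TwoSidedIdeal.span {ι 0 1}, χ x ≠ 0 := by
  have map_corner (n : ℕ) (a : GA F n) :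
      ι n (borelIdem F n * a * borelIdem F n) = ι 0 1 * ι n a * ι 0 1 := by
    rw [hι.map_mul, hι.map_mul, hι.map_borelIdem]
  rw [exists_mem_span_ne_zero_iff_exists_corner_ne_zero hι.isIdempotentElem_map_one hχ]
  constructor
  · rintro ⟨n, a, ha, hχa⟩
    rw [← mem_heckeSet_iff.1 ha, map_corner] at hχa
    exact ⟨_, hχa⟩
  · rintro ⟨x, hx⟩
    obtain ⟨n, a, rfl⟩ := hι.exists_map_eq x
    have he := isIdempotentElem_borelIdem (F := F) (n := n)
    refine ⟨n, borelIdem F n * a * borelIdem F n, mem_heckeSet_iff.2 ?_, by rwa [map_corner]⟩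
    simp only [mul_assoc, he.eq]
    rw [← mul_assoc, he.eq]

end IsGLBQuotient

end Quotient

theorem unipotent_trace_characterizations_general {A : Type} [NonUnitalRing A] [Module ℂ A]
    [SMulCommClass ℂ A A] [StarRing A] [StarModule ℂ A] {ι : ∀ n, GA F n →ₗ[ℂ] A}
    (hι : IsGLBQuotient ι) {χ : A →ₗ[ℂ] ℂ} (hχ : IsExtremeTrace χ) :
    ((∀ n, IsUnipotentFunctional F (fun a => χ (ι n a))) ↔
      ∃ n, ∃ a ∈ heckeSet F n, χ (ι n a) ≠ 0) ∧
    ((∀ n, IsUnipotentFunctional F (fun a => χ (ι n a))) ↔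
      ∃ x ∈ TwoSidedIdeal.span {ι 0 1}, χ x ≠ 0) := by
  choose z hz using fun n => exists_isCentralCover (borelIdem F n)
  obtain ⟨Z, hZproj, hZ⟩ := hι.exists_isCentralProjection hz
  have hdich : χ ∘ₗ Z = χ ↔ χ ∘ₗ Z ≠ 0 := by
    refine ⟨fun h => ?_, (hχ.comp_isCentralProjection_eq_self_or_eq_zero hZproj).resolve_right⟩
    rw [h]
    exact hχ.2.1
  have hspan : (∀ n, IsUnipotentFunctional F (fun a => χ (ι n a))) ↔
      ∃ x ∈ TwoSidedIdeal.span {ι 0 1}, χ x ≠ 0 := by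
    rw [hι.forall_isUnipotentFunctional_iff hz hZ hχ.1.1, hdich,
      hι.exists_mem_span_ne_zero_iff hz hZproj hZ]
  exact ⟨hspan.trans (hι.exists_mem_heckeSet_ne_zero_iff hχ.1.1).symm, hspan⟩

/-- **Proposition 3.1** (equivalence of conditions (1)–(3)).
Here `A`, together with the compatible system `ι` of injective multiplicative linear maps
from the group algebras `ℂ[GL(n,q)]` (along the parabolic embeddings) whose images exhaust `A`,
realizes the Schwartz–Bruhat algebra `A(GLB)` with its canonical involution. For a nonzero
extreme trace `χ` of `A(GLB)` the following are equivalent: (1) every restriction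
`a ↦ χ([a])` to `ℂ[GL(n,q)]` is a linear combination of characters of irreducible unipotent
representations; (2) `χ` does not vanish identically on `H_q(∞) = ⋃_n [H_q(n)]`;
(3) `χ` does not vanish identically on the two-sided ideal generated by `I_B`. -/
theorem unipotent_trace_characterizations
    (A : Type) [NonUnitalRing A] [Module ℂ A] [SMulCommClass ℂ A A] [IsScalarTower ℂ A A]
    [StarRing A] [StarModule ℂ A]
    (ι : ∀ n : ℕ, GA F n →ₗ[ℂ] A)
    (hcomp : ∀ n : ℕ, (ι (n + 1)).comp (paraEmb F n) = ι n)
    (hmul : ∀ (n : ℕ) (a b : GA F n), ι n (a * b) = ι n a * ι n b)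
    (hinj : ∀ n : ℕ, Function.Injective (ι n))
    (hexhaust : ∀ x : A, ∃ (n : ℕ) (a : GA F n), ι n a = x)
    (hstar : ∀ (n : ℕ) (g : GLn F n),
      star (ι n (MonoidAlgebra.single g 1)) = ι n (MonoidAlgebra.single g⁻¹ 1))
    (χ : A →ₗ[ℂ] ℂ)
    (hextreme : IsExtremeTrace χ) :
    ((∀ n : ℕ, IsUnipotentFunctional F (fun a => χ (ι n a))) ↔
      (∃ (n : ℕ) (a : GA F n), a ∈ heckeSet F n ∧ χ (ι n a) ≠ 0)) ∧
    ((∀ n : ℕ, IsUnipotentFunctional F (fun a => χ (ι n a))) ↔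
      (∃ x ∈ TwoSidedIdeal.span ({ι 0 1} : Set A), χ x ≠ 0)) :=
  unipotent_trace_characterizations_general F
    ⟨fun n => LinearMap.congr_fun (hcomp n), hmul, hexhaust, hstar⟩ hextreme
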